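/- Let n, m ≥ 2 be integers and let G = P_n □ P_m be the grid, which has nm vertices. Then 2 ∉ S_SC(G), 3 ∉ S_SC(G), 5 ∉ S_SC(G) and nm−1 ∉ S_SC(G). Moreover, for every i ∈ {3, 4, 5, 6}, if n ≥ i and m ≥ i, then nm−(i−1) ∉ S_SC(G). -/

import Mathlib

/-!  Common definitions: oriented graphs, geodesic convexity, convexity number,
strong convexity spectrum, and grid graphs. -/

variable {V : Type*}

/-- A directed walk of length `k` from `u` to `v` along the arc relation `A`,
encoded by the function `f` listing its vertices. -/
def IsDirWalk (A : V → V → Prop) (k : ℕ) (f : ℕ → V) (u v : V) : Prop :=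
  f 0 = u ∧ f k = v ∧ ∀ i, i < k → A (f i) (f (i + 1))

/-- There is a directed walk from `u` to `v`. -/
def DirReachable (A : V → V → Prop) (u v : V) : Prop :=
  ∃ k f, IsDirWalk A k f u v

/-- A digraph (given by its arc relation) is strongly connected. -/
def StrongConnected (A : V → V → Prop) : Prop :=
  ∀ u v : V, DirReachable A u v

/-- A `uv`-geodesic: a directed walk from `u` to `v` of minimum possible length
(such a walk is automatically a directed path). -/
def IsGeodesic (A : V → V → Prop) (k : ℕ) (f : ℕ → V) (u v : V) : Prop :=
  IsDirWalk A k f u v ∧ ∀ k' f', IsDirWalk A k' f' u v → k ≤ k'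

/-- A nonempty vertex set `C` is convex if every vertex lying on a geodesic
between two vertices of `C` (in either direction) belongs to `C`. -/
def DConvex (A : V → V → Prop) (C : Set V) : Prop :=
  C.Nonempty ∧ ∀ u ∈ C, ∀ v ∈ C, ∀ k f, IsGeodesic A k f u v → ∀ i ≤ k, f i ∈ C

/-- `A` is an orientation of the simple graph `G`: every arc is along an edge,
every edge gets an arc, and no edge gets both directions. -/
def IsOrientation (G : SimpleGraph V) (A : V → V → Prop) : Prop :=
  (∀ x y, A x y → G.Adj x y) ∧ (∀ x y, G.Adj x y → A x y ∨ A y x) ∧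
    (∀ x y, A x y → ¬ A y x)

/-- The convexity number of a digraph: the maximum cardinality of a proper convex set. -/
noncomputable def convexityNumber [Fintype V] (A : V → V → Prop) : ℕ :=
  sSup {k | ∃ C : Set V, DConvex A C ∧ C ≠ Set.univ ∧ C.ncard = k}

/-- The strong convexity spectrum of a graph: the set of convexity numbers of
its strongly connected orientations. -/
def strongConvexitySpectrum [Fintype V] (G : SimpleGraph V) : Set ℕ :=
  {k | ∃ A : V → V → Prop, IsOrientation G A ∧ StrongConnected A ∧ convexityNumber A = k}

/-- The grid graph `P_n □ P_m`. -/
def gridGraph (n m : ℕ) : SimpleGraph (Fin n × Fin m) :=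
  (SimpleGraph.pathGraph n).boxProd (SimpleGraph.pathGraph m)

/-!
Large values. A convex set missing at most five vertices, and fewer than `n` and `m`, contains a
full row and a full column, so some of the missing vertices form a hole `H` in a quadrant of the
lattice. Let `p` be the cell of `H` farthest from the corner of the quadrant; after reversing all
arcs if necessary, `p` is entered from `C`. A shortest walk from `p` back to `C` yields detours
through `H` between vertices of `C`. As geodesics between vertices of `C` stay in `C`, each detour
is longer, by parity at least two longer, than a geodesic, which bounds the lattice distance of its
ends. With at most five cells these bounds leave only a hole in the shape of a chair, in which the
arc at the dead end produces one detour too many.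

Small values. Every vertex of a convex set with at least two elements has an in-neighbour and a
different out-neighbour in the set, whereas the grid is bipartite and any two of its vertices have
at most two common neighbours.
-/

/-! ### Walks and convexity -/

section Walks

variable {A : V → V → Prop} {C : Set V} {f g : ℕ → V} {i j k l : ℕ} {u v w : V}

/-- There is a directed walk of length exactly `k` from `u` to `v`: `IsDirWalk` with its list of
vertices forgotten. -/
def HasDirWalk (A : V → V → Prop) (k : ℕ) (u v : V) : Prop := ∃ f, IsDirWalk A k f u v

theorem IsDirWalk.append (hf : IsDirWalk A k f u v) (hg : IsDirWalk A l g v w) :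
    IsDirWalk A (k + l) (fun i => if i ≤ k then f i else g (i - k)) u w := by
  obtain ⟨f0, fk, hf⟩ := hf
  obtain ⟨g0, gl, hg⟩ := hg
  refine ⟨by simpa, ?_, fun i hi => ?_⟩
  · rcases l.eq_zero_or_pos with rfl | hl
    · simp [fk, ← g0, gl]
    · simp [gl, hl.ne']
  · rcases lt_trichotomy i k with h | rfl | h
    · simpa [h.le, Nat.succ_le_of_lt h] using hf i h
    · simpa [fk, ← g0] using hg 0 (by omega)
    · simpa [h.not_ge, (h.trans i.lt_succ_self).not_ge, Nat.succ_sub h.le] using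
        hg (i - k) (by omega)

theorem IsDirWalk.reverse (hf : IsDirWalk A k f u v) :
    IsDirWalk (flip A) k (fun i => f (k - i)) v u := by
  refine ⟨by simpa using hf.2.1, by simpa using hf.1, fun i hi => ?_⟩
  have := hf.2.2 (k - (i + 1)) (by omega)
  rwa [show k - (i + 1) + 1 = k - i by omega] at this

theorem IsDirWalk.segment (hf : IsDirWalk A k f u v) (hij : i ≤ j) (hj : j ≤ k) :
    HasDirWalk A (j - i) (f i) (f j) :=
  ⟨fun m => f (i + m), rfl, by simp [hij], fun m hm => hf.2.2 (i + m) (by omega)⟩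

theorem IsDirWalk.pos_of_ne (hf : IsDirWalk A k f u v) (h : u ≠ v) : 0 < k :=
  Nat.pos_of_ne_zero fun hk => h (hf.1.symm.trans (hk ▸ hf.2.1))

theorem IsDirWalk.first_arc (hf : IsDirWalk A k f u v) (hk : 0 < k) : A u (f 1) :=
  hf.1 ▸ hf.2.2 0 hk

theorem HasDirWalk.of_arc (h : A u v) : HasDirWalk A 1 u v :=
  ⟨fun i => if i = 0 then u else v, by simp, by simp, by simpa⟩

theorem HasDirWalk.trans (h : HasDirWalk A k u v) (h' : HasDirWalk A l v w) :
    HasDirWalk A (k + l) u w :=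
  let ⟨_, hf⟩ := h
  let ⟨_, hg⟩ := h'
  ⟨_, hf.append hg⟩

theorem HasDirWalk.exists_geodesic_le (h : HasDirWalk A k u v) :
    ∃ l ≤ k, ∃ g, IsGeodesic A l g u v := by
  classical
  have h' : ∃ k, HasDirWalk A k u v := ⟨k, h⟩
  obtain ⟨g, hg⟩ := Nat.find_spec h'
  exact ⟨Nat.find h', Nat.find_min' h' h, g, hg, fun _ p hp => Nat.find_min' h' ⟨p, hp⟩⟩

theorem IsGeodesic.reverse (hf : IsGeodesic A k f u v) :
    IsGeodesic (flip A) k (fun i => f (k - i)) v u :=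
  ⟨hf.1.reverse, fun _ _ h => hf.2 _ _ h.reverse⟩

theorem StrongConnected.flip (hA : StrongConnected A) : StrongConnected (flip A) := fun u v =>
  let ⟨k, _, hf⟩ := hA v u
  ⟨k, _, hf.reverse⟩

theorem StrongConnected.exists_arc_from (hA : StrongConnected A) (h : u ≠ v) : ∃ x, A u x :=
  let ⟨_, f, hf⟩ := hA u v
  ⟨f 1, hf.first_arc (hf.pos_of_ne h)⟩

theorem DConvex.flip (hC : DConvex A C) : DConvex (flip A) C := by
  refine ⟨hC.1, fun u hu v hv k f hf i hi => ?_⟩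
  simpa [Nat.sub_sub_self hi] using hC.2 v hv u hu k _ hf.reverse (k - i) (k.sub_le i)

theorem DConvex.exists_shorter_geodesic (hC : DConvex A C) (hu : u ∈ C) (hv : v ∉ C) (hw : w ∈ C)
    (huv : HasDirWalk A k u v) (hvw : HasDirWalk A l v w) :
    ∃ m < k + l, ∃ g, IsGeodesic A m g u w := by
  obtain ⟨m, hm, g, hg⟩ := (huv.trans hvw).exists_geodesic_le
  refine ⟨m, hm.lt_of_ne ?_, g, hg⟩
  rintro rfl
  obtain ⟨f, hf⟩ := huv
  obtain ⟨f', hf'⟩ := hvw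
  have := hC.2 u hu w hw _ _ ⟨hf.append hf', hg.2⟩ k (k.le_add_right l)
  simp only [le_refl, if_true, hf.2.1] at this
  exact hv this

theorem IsOrientation.adj_iff {G : SimpleGraph V} (hA : IsOrientation G A) :
    A u v ∨ A v u ↔ G.Adj u v :=
  ⟨fun h => h.elim (hA.1 u v) fun h => (hA.1 v u h).symm, hA.2.1 u v⟩

/-- `f` is a directed walk of length `k` from `u` to the set `C`, shortest among all walks from `u`
to `C`. -/
structure IsShortestWalkTo (A : V → V → Prop) (C : Set V) (k : ℕ) (f : ℕ → V) (u : V) :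
    Prop where
  walk : IsDirWalk A k f u (f k)
  mem : f k ∈ C
  le : ∀ l, ∀ v ∈ C, HasDirWalk A l u v → k ≤ l

theorem StrongConnected.exists_isShortestWalkTo (hA : StrongConnected A) (hC : C.Nonempty) (u : V) :
    ∃ k f, IsShortestWalkTo A C k f u := by
  classical
  have h : ∃ k, ∃ v ∈ C, HasDirWalk A k u v :=
    let ⟨v, hv⟩ := hC
    let ⟨k, hk⟩ := hA u v
    ⟨k, v, hv, hk⟩
  obtain ⟨v, hv, f, hf⟩ := Nat.find_spec h
  exact ⟨Nat.find h, f, hf.2.1 ▸ hf, hf.2.1 ▸ hv, fun l w hw hl => Nat.find_min' h ⟨w, hw, hl⟩⟩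

namespace IsShortestWalkTo

theorem segment_to (hf : IsShortestWalkTo A C k f u) (hi : i ≤ k) : HasDirWalk A i u (f i) := by
  simpa [hf.walk.1] using hf.walk.segment i.zero_le hi

theorem notMem (hf : IsShortestWalkTo A C k f u) (hi : i < k) : f i ∉ C := fun h =>
  hi.not_ge (hf.le i _ h (hf.segment_to hi.le))

theorem le_of_arc (hf : IsShortestWalkTo A C k f u) (hi : i ≤ k) (hv : v ∈ C) (h : A (f i) v) :
    k ≤ i + 1 :=
  hf.le _ v hv ((hf.segment_to hi).trans (.of_arc h))

theorem injOn (hf : IsShortestWalkTo A C k f u) : Set.InjOn f (Set.Iic k) := by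
  have le_of_eq : ∀ i j, j ≤ k → f i = f j → j ≤ i := fun i j hj h => by
    by_contra! hij
    have := hf.le _ _ hf.mem
      ((hf.segment_to (hij.le.trans hj)).trans (h ▸ hf.walk.segment hj le_rfl))
    omega
  exact fun i hi j hj h => le_antisymm (le_of_eq j i hi h.symm) (le_of_eq i j hj h)

end IsShortestWalkTo

end Walks

/-! ### Escape paths in the lattice -/

/-- The `ℓ¹` distance on `ℤ × ℤ`; grid adjacency means distance one. -/
def taxiDist (z w : ℤ × ℤ) : ℕ := (z.1 - w.1).natAbs + (z.2 - w.2).natAbs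

/-- The points at distance one, as a `Finset` so that short lattice paths can be enumerated. -/
def latticeNeighbors (z : ℤ × ℤ) : Finset (ℤ × ℤ) :=
  {(z.1 + 1, z.2), (z.1 - 1, z.2), (z.1, z.2 + 1), (z.1, z.2 - 1)}

theorem mem_latticeNeighbors {z w : ℤ × ℤ} : w ∈ latticeNeighbors z ↔ taxiDist z w = 1 := by
  simp only [latticeNeighbors, taxiDist, Finset.mem_insert, Finset.mem_singleton, Prod.ext_iff]
  omega

theorem eq_of_taxiDist_eq_one {x y : ℤ} {w : ℤ × ℤ} (h : taxiDist (x, y) w = 1) :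
    w = (x + 1, y) ∨ w = (x - 1, y) ∨ w = (x, y + 1) ∨ w = (x, y - 1) := by
  simpa [latticeNeighbors] using mem_latticeNeighbors.2 h

-- Only steps right and up are offered as `d` and `d'`: they never leave a quadrant containing the
-- path, so the position of its corner does not matter.
theorem exists_far_pair : ∀ z₂ ∈ latticeNeighbors (-1, 0), ∀ z₃ ∈ latticeNeighbors z₂,
    ∀ z₄ ∈ latticeNeighbors z₃,
    let t : Fin 5 → ℤ × ℤ := ![(0, 0), (-1, 0), z₂, z₃, z₄]
    t.Injective → (0, 1) ∉ Set.range t → (0, 2) ∉ Set.range t →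
    (z₂, z₃, z₄) = ((-1, 1), (-2, 1), (-2, 0)) ∨
    ∃ i < 4, ∃ d ∈ [(1, 0), (0, 1)], ∃ d' ∈ [(1, 0), (0, 1)],
      t i + d ∉ Set.range t ∧ t 4 + d' ∉ Set.range t ∧ 4 < taxiDist (t i + d) (t 4 + d') + i := by
  decide

theorem taxiDist_swap (z w : ℤ × ℤ) : taxiDist z.swap w.swap = taxiDist z w := Nat.add_comm _ _

theorem eq_of_between {a b y z : ℤ × ℤ} (straight : a.1 = b.1 ∨ a.2 = b.2)
    (between : taxiDist a z + taxiDist z b = taxiDist a b) (hay : taxiDist a y ≤ taxiDist a z)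
    (hyb : taxiDist y b ≤ taxiDist z b) : y = z := by
  obtain ⟨a1, a2⟩ := a
  obtain ⟨b1, b2⟩ := b
  obtain ⟨y1, y2⟩ := y
  obtain ⟨z1, z2⟩ := z
  simp only [taxiDist, Prod.mk.injEq] at *
  rcases straight with rfl | rfl
  · have : z1 = a1 := by omega
    subst this
    have : y1 = z1 := by omega
    omega
  · have : z2 = a2 := by omega
    subst this
    have : y2 = z2 := by omega
    omega

theorem taxiDist_sub_right (z w y : ℤ × ℤ) : taxiDist (z - y) (w - y) = taxiDist z w := by
  simp [taxiDist]

theorem exists_pair_of_taxiDist_eq_one {p q : ℤ × ℤ} (hpq : p ≠ q) :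
    ∃ a b, ∀ z, taxiDist p z = 1 → taxiDist q z = 1 → z = a ∨ z = b := by
  by_cases straight : p.1 = q.1 ∨ p.2 = q.2
  · refine ⟨((p.1 + q.1) / 2, (p.2 + q.2) / 2), (0, 0), fun z hpz hqz => .inl ?_⟩
    simp only [taxiDist, ne_eq, Prod.ext_iff] at *
    omega
  · refine ⟨(p.1, q.2), (q.1, p.2), fun z hpz hqz => ?_⟩
    simp only [taxiDist, Prod.ext_iff] at *
    omega

/-- The lattice picture of a shortest walk out of a hole in a convex set. The hole `T` consists of
at most five cells of the quadrant `Set.Ici c`, in coordinates whose origin is a cell of `T`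
farthest from the corner `c`: `outermost` says `‖z - c‖² ≤ ‖c‖²`. The path `t 0, …, t n` starts
there and stays in `T`, and `t n` has a neighbour in the quadrant outside `T`.

Entering the path from `u` at `t i`, following it and leaving it from `t n` to `w` takes `n - i + 2`
steps, which exceeds the distance from `u` to `w` by at least two; this is `near`. If `u` and `w`
lie on a line and `T` blocks the segment between them, the inequality is strict; this is
`near_of_blocked`. -/
structure EscapePath (c : ℤ × ℤ) (T : Set (ℤ × ℤ)) (n : ℕ) (t : ℕ → ℤ × ℤ) : Prop where
  pos : 0 < n
  start : t 0 = (0, 0)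
  mem : ∀ i ≤ n, t i ∈ T
  injOn : Set.InjOn t (Set.Iic n)
  step : ∀ i < n, taxiDist (t i) (t (i + 1)) = 1
  exit : ∃ w ∈ Set.Ici c \ T, taxiDist (t n) w = 1
  near : ∀ i < n, ∀ u ∈ Set.Ici c \ T, taxiDist (t i) u = 1 →
    ∀ w ∈ Set.Ici c \ T, taxiDist (t n) w = 1 → taxiDist u w + i ≤ n
  near_of_blocked : ∀ i < n, ∀ u ∈ Set.Ici c \ T, taxiDist (t i) u = 1 →
    ∀ w ∈ Set.Ici c \ T, taxiDist (t n) w = 1 → (u.1 = w.1 ∨ u.2 = w.2) →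
      ∀ z ∈ T, taxiDist u z + taxiDist z w = taxiDist u w → taxiDist u w + i < n
  subset_Ici : T ⊆ Set.Ici c
  encard_le : T.encard ≤ 5
  outermost : ∀ z ∈ T, z.1 * (z.1 - 2 * c.1) + z.2 * (z.2 - 2 * c.2) ≤ 0

namespace EscapePath

variable {c z w : ℤ × ℤ} {T : Set (ℤ × ℤ)} {n i : ℕ} {t : ℕ → ℤ × ℤ}

theorem zero_mem (P : EscapePath c T n t) : (0, 0) ∈ T := P.start ▸ P.mem 0 n.zero_le

theorem corner_le (P : EscapePath c T n t) {x y : ℤ} (h : (x, y) ∈ T) : c.1 ≤ x ∧ c.2 ≤ y :=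
  P.subset_Ici h

theorem right_mem (P : EscapePath c T n t) : (1, 0) ∈ Set.Ici c \ T := by
  have hc := P.corner_le P.zero_mem
  refine ⟨Prod.le_def.2 ⟨by simp only; omega, hc.2⟩, fun h => ?_⟩
  have := P.outermost _ h
  omega

theorem up_mem (P : EscapePath c T n t) : (0, 1) ∈ Set.Ici c \ T := by
  have hc := P.corner_le P.zero_mem
  refine ⟨Prod.le_def.2 ⟨hc.1, by simp only; omega⟩, fun h => ?_⟩
  have := P.outermost _ h
  omega

theorem card_le (P : EscapePath c T n t) {S : Finset (ℤ × ℤ)} (hS : (S : Set (ℤ × ℤ)) ⊆ T) :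
    S.card ≤ 5 := by
  have := (Set.encard_le_encard hS).trans P.encard_le
  rw [Set.encard_coe_eq_coe_finsetCard] at this
  exact_mod_cast this

theorem not_subset_of_card (P : EscapePath c T n t) {S : Finset (ℤ × ℤ)} (hcard : 5 < S.card) :
    ¬(S : Set (ℤ × ℤ)) ⊆ T := fun hS =>
  hcard.not_ge (P.card_le hS)

theorem eq_coe (P : EscapePath c T n t) {S : Finset (ℤ × ℤ)} (hS : (S : Set (ℤ × ℤ)) ⊆ T)
    (hcard : S.card = 5) : T = S := by
  refine ((Set.Finite.eq_of_subset_of_encard_le S.finite_toSet hS ?_)).symm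
  rw [Set.encard_coe_eq_coe_finsetCard, hcard]
  exact P.encard_le

theorem le_four (P : EscapePath c T n t) : n ≤ 4 := by
  have h := P.card_le (S := (Finset.Iic n).image t) (by
    simpa [Set.subset_def] using P.mem)
  rw [Finset.card_image_of_injOn (by simpa using P.injOn), Nat.card_Iic] at h
  omega

theorem next (P : EscapePath c T n t) (j : ℕ) (hij : i + 1 = j) (hj : j ≤ n) {x y : ℤ}
    (h : t i = (x, y)) :
    t j = (x + 1, y) ∨ t j = (x - 1, y) ∨ t j = (x, y + 1) ∨ t j = (x, y - 1) := by
  subst hij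
  exact eq_of_taxiDist_eq_one (h ▸ P.step i hj)

theorem ne (P : EscapePath c T n t) {j : ℕ} (hij : i < j) (hj : j ≤ n) : t i ≠ t j := fun h =>
  hij.ne (P.injOn (hij.le.trans hj) hj h)

theorem mem_of_far (P : EscapePath c T n t) (hi : i < n) (hti : t i = z) {x y : ℤ}
    (hx : c.1 ≤ x) (hy : c.2 ≤ y) (hz : taxiDist z (x, y) = 1) (hw : w ∈ Set.Ici c \ T)
    (hnw : taxiDist (t n) w = 1) (far : n < taxiDist (x, y) w + i) : (x, y) ∈ T := by
  by_contra h
  exact far.not_ge (P.near i hi _ ⟨⟨hx, hy⟩, h⟩ (hti ▸ hz) w hw hnw)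

theorem exit_mem_of_far (P : EscapePath c T n t) (htn : t n = z) {x y : ℤ}
    (hx : c.1 ≤ x) (hy : c.2 ≤ y) (hz : taxiDist z (x, y) = 1)
    (far : n < taxiDist (1, 0) (x, y)) : (x, y) ∈ T := by
  by_contra h
  exact far.not_ge
    (P.near 0 P.pos _ P.right_mem (by rw [P.start]; rfl) _ ⟨⟨hx, hy⟩, h⟩ (htn ▸ hz))

theorem exists_exit_near_start (P : EscapePath c T n t) :
    ∃ w ∈ Set.Ici c \ T, taxiDist (t n) w = 1 ∧ taxiDist (1, 0) w ≤ n ∧ taxiDist (0, 1) w ≤ n ∧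
    (w.1 < 0 → w.2 = 0 → taxiDist (1, 0) w < n) ∧ (w.1 = 0 → w.2 < 0 → taxiDist (0, 1) w < n) := by
  obtain ⟨w, hw, hnw⟩ := P.exit
  have right : taxiDist (t 0) (1, 0) = 1 := by rw [P.start]; rfl
  have up : taxiDist (t 0) (0, 1) = 1 := by rw [P.start]; rfl
  refine ⟨w, hw, hnw, P.near 0 P.pos _ P.right_mem right w hw hnw,
    P.near 0 P.pos _ P.up_mem up w hw hnw, fun h1 h2 => ?_, fun h1 h2 => ?_⟩
  · refine P.near_of_blocked 0 P.pos _ P.right_mem right w hw hnw (.inr h2.symm) _ P.zero_mem ?_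
    simp only [taxiDist]
    omega
  · refine P.near_of_blocked 0 P.pos _ P.up_mem up w hw hnw (.inl h1.symm) _ P.zero_mem ?_
    simp only [taxiDist]
    omega

theorem length_ne_one (P : EscapePath c T n t) (h1 : t 1 = (-1, 0)) : n ≠ 1 := by
  rintro rfl
  obtain ⟨w, hw, hnw, hr, hu, -⟩ := P.exists_exit_near_start
  have : w ≠ (0, 0) := fun h => hw.2 (h ▸ P.zero_mem)
  simp only [h1, taxiDist, ne_eq, Prod.ext_iff] at hnw hr hu this
  omega

theorem second_step (P : EscapePath c T n t) (hn : 2 ≤ n) (h1 : t 1 = (-1, 0)) :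
    t 2 = (-2, 0) ∨ t 2 = (-1, 1) ∨ t 2 = (-1, -1) := by
  rcases P.next 2 rfl hn h1 with h2 | h2
  · exact absurd (P.start.trans h2.symm) (P.ne zero_lt_two hn)
  · simpa using h2

theorem turn_of_length_two (P : EscapePath c T 2 t) (h1 : t 1 = (-1, 0)) :
    t 2 = (-1, 1) ∧ (0, 1) ∈ Set.Ici c \ T ∧ taxiDist (t 2) (0, 1) = 1 := by
  obtain ⟨w, hw, hnw, hr, hu, hrb, hub⟩ := P.exists_exit_near_start
  have w1 : w ≠ (-1, 0) := fun h => hw.2 (h ▸ h1 ▸ P.mem 1 (by omega))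
  rcases P.second_step le_rfl h1 with h2 | h2 | h2 <;> rw [h2] at hnw <;>
    rcases eq_of_taxiDist_eq_one hnw with rfl | rfl | rfl | rfl <;>
    simp [taxiDist] at w1 hr hu hrb hub
  exact ⟨h2, by simpa using hw, by rw [h2]; rfl⟩

theorem turns_of_length_three (P : EscapePath c T 3 t) (h1 : t 1 = (-1, 0)) :
    ∃ w ∈ Set.Ici c \ T, taxiDist (t 3) w = 1 ∧
      (t 2 = (-2, 0) ∧ t 3 = (-2, -1) ∧ w = (-1, -1) ∨
       t 2 = (-2, 0) ∧ t 3 = (-2, 1) ∧ w = (-1, 1) ∨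
       t 2 = (-1, -1) ∧ t 3 = (0, -1) ∧ w = (1, -1) ∨
       t 2 = (-1, 1) ∧ t 3 = (-1, 2) ∧ w = (0, 2)) := by
  obtain ⟨w, hw, hnw, hr, hu, hrb, hub⟩ := P.exists_exit_near_start
  refine ⟨w, hw, hnw, ?_⟩
  have w0 : w ≠ (0, 0) := fun h => hw.2 (h ▸ P.zero_mem)
  have w2 : w ≠ t 2 := fun h => hw.2 (h ▸ P.mem 2 (by omega))
  have n13 : t 1 ≠ t 3 := P.ne (by omega) le_rfl
  have n3 : t 3 ≠ (0, 1) := fun h => P.up_mem.2 (h ▸ P.mem 3 le_rfl)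
  rcases P.second_step (by omega) h1 with h2 | h2 | h2 <;>
    rcases P.next 3 rfl le_rfl h2 with h3 | h3 | h3 | h3 <;> rw [h3] at hnw <;>
    rcases eq_of_taxiDist_eq_one hnw with rfl | rfl | rfl | rfl <;>
    simp [h1, h2, h3, taxiDist] at w0 w2 n13 n3 hr hu hrb hub ⊢

theorem length_ne_two (P : EscapePath c T n t) (h1 : t 1 = (-1, 0)) : n ≠ 2 := by
  rintro rfl
  obtain ⟨h2, hw, hnw⟩ := P.turn_of_length_two h1
  have m1 := h1 ▸ P.mem 1 (by omega)
  have m2 := h2 ▸ P.mem 2 le_rfl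
  have c0 := P.corner_le P.zero_mem
  have c1 := P.corner_le m1
  have m3 : (-1, 2) ∈ T := P.exit_mem_of_far h2 (by omega) (by omega) rfl (by decide)
  have c3 : c.1 ≤ -2 := by
    have := P.outermost _ m3
    omega
  have m4 : (-2, 0) ∈ T := P.mem_of_far one_lt_two h1 c3 c0.2 rfl hw hnw (by decide)
  have m5 : (-2, 1) ∈ T := P.exit_mem_of_far h2 c3 (by omega) rfl (by decide)
  exact P.not_subset_of_card (S := {(0, 0), (-1, 0), (-1, 1), (-1, 2), (-2, 0), (-2, 1)})
    (by decide) (by simp [Set.insert_subset_iff, P.zero_mem, *])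

theorem chair_of_length_three (P : EscapePath c T 3 t) (h1 : t 1 = (-1, 0)) :
    t 3 = (-2, 1) ∧ T = {(0, 0), (-1, 0), (-2, 0), (-2, 1), (-2, 2)} := by
  obtain ⟨w, hw, hnw, ⟨h2, h3, rfl⟩ | ⟨h2, h3, rfl⟩ | ⟨h2, h3, rfl⟩ | ⟨h2, h3, rfl⟩⟩ :=
    P.turns_of_length_three h1
  all_goals
    have m1 := h1 ▸ P.mem 1 (by omega)
    have m2 := h2 ▸ P.mem 2 (by omega)
    have m3 := h3 ▸ P.mem 3 le_rfl
    have c0 := P.corner_le P.zero_mem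
    have c2 := P.corner_le m2
    have c3 := P.corner_le m3
  · have m4 : (-2, 1) ∈ T :=
      P.mem_of_far (by omega) h2 (by omega) (by omega) rfl hw hnw (by decide)
    have m5 : (-1, 1) ∈ T := by
      by_contra h
      have hu : ((-1 : ℤ), (1 : ℤ)) ∈ Set.Ici c \ T :=
        ⟨Prod.le_def.2 ⟨by simp only; omega, by simp only; omega⟩, h⟩
      exact absurd
        (P.near_of_blocked 1 (by omega) _ hu (by rw [h1]; rfl) _ hw hnw (.inl rfl) _ m1 rfl)
        (by decide)
    exact (P.not_subset_of_card (S := {(0, 0), (-1, 0), (-2, 0), (-2, -1), (-2, 1), (-1, 1)})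
      (by decide) (by simp [Set.insert_subset_iff, P.zero_mem, *])).elim
  · have m4 : (-2, 2) ∈ T := P.exit_mem_of_far h3 (by omega) (by omega) rfl (by decide)
    refine ⟨h3, ?_⟩
    have := P.eq_coe (S := {(0, 0), (-1, 0), (-2, 0), (-2, 1), (-2, 2)})
      (by simp [Set.insert_subset_iff, P.zero_mem, *]) rfl
    simpa using this
  · have m4 : (-1, 1) ∈ T :=
      P.mem_of_far (by omega) h1 (by omega) (by omega) rfl hw hnw (by decide)
    have c1 : c.1 ≤ -2 := by
      have := P.outermost _ m4
      omega
    have m5 : (-2, 0) ∈ T :=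
      P.mem_of_far (by omega) h1 (by omega) (by omega) rfl hw hnw (by decide)
    exact (P.not_subset_of_card (S := {(0, 0), (-1, 0), (-1, -1), (0, -1), (-1, 1), (-2, 0)})
      (by decide) (by simp [Set.insert_subset_iff, P.zero_mem, *])).elim
  · have m4 : (-1, 3) ∈ T := P.exit_mem_of_far h3 (by omega) (by omega) rfl (by decide)
    have c1 : c.1 ≤ -2 := by
      have := P.outermost _ m4
      omega
    have m5 : (-2, 0) ∈ T :=
      P.mem_of_far (by omega) h1 (by omega) (by omega) rfl hw hnw (by decide)
    exact (P.not_subset_of_card (S := {(0, 0), (-1, 0), (-1, 1), (-1, 2), (-1, 3), (-2, 0)})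
      (by decide) (by simp [Set.insert_subset_iff, P.zero_mem, *])).elim

theorem injective_fin (P : EscapePath c T 4 t) : Function.Injective fun j : Fin 5 => t j :=
  fun i j h => Fin.ext (P.injOn (Nat.lt_succ_iff.1 i.2) (Nat.lt_succ_iff.1 j.2) h)

theorem range_fin (P : EscapePath c T 4 t) : Set.range (fun j : Fin 5 => t j) = T := by
  have h := P.eq_coe (S := Finset.univ.image fun j : Fin 5 => t j)
    (by simpa [Set.range_subset_iff] using fun j : Fin 5 => P.mem j (Nat.lt_succ_iff.1 j.2))
    (by simp [Finset.card_image_of_injective _ P.injective_fin])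
  simpa using h.symm

theorem not_hook (P : EscapePath c T 4 t) (h1 : t 1 = (-1, 0)) (h2 : t 2 = (-1, 1))
    (h3 : t 3 = (-2, 1)) (h4 : t 4 = (-2, 0)) : False := by
  have m1 := h1 ▸ P.mem 1 (by omega)
  have m2 := h2 ▸ P.mem 2 (by omega)
  have m3 := h3 ▸ P.mem 3 (by omega)
  have m4 := h4 ▸ P.mem 4 le_rfl
  have c3 := P.corner_le m3
  obtain ⟨w, hw, hnw, -, -, hrb, -⟩ := P.exists_exit_near_start
  rcases eq_of_taxiDist_eq_one (h4 ▸ hnw) with rfl | rfl | rfl | rfl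
  · exact hw.2 m1
  · exact absurd (hrb (by decide) rfl) (by decide)
  · exact hw.2 m3
  · have m5 : (-2, 2) ∈ T :=
      P.mem_of_far (by omega) h3 (by omega) (by omega) rfl hw hnw (by decide)
    exact P.not_subset_of_card (S := {(0, 0), (-1, 0), (-1, 1), (-2, 1), (-2, 0), (-2, 2)})
      (by decide) (by simp [Set.insert_subset_iff, P.zero_mem, *])

theorem mem_Ici_add (P : EscapePath c T n t) {z d : ℤ × ℤ} (hz : z ∈ T)
    (hd : d ∈ [((1 : ℤ), (0 : ℤ)), (0, 1)]) : z + d ∈ Set.Ici c ∧ taxiDist z (z + d) = 1 := by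
  refine ⟨Set.mem_Ici.2 (le_add_of_le_of_nonneg (P.subset_Ici hz) ?_), ?_⟩
  · revert d
    decide
  · rw [← mem_latticeNeighbors]
    simp only [List.mem_cons, List.not_mem_nil, or_false] at hd
    rcases hd with rfl | rfl <;> simp [latticeNeighbors, Prod.ext_iff]

theorem length_ne_four (P : EscapePath c T n t) (h1 : t 1 = (-1, 0)) : n ≠ 4 := by
  rintro rfl
  have hpath : ![(0, 0), (-1, 0), t 2, t 3, t 4] = fun j : Fin 5 => t j := by
    rw [← P.start, ← h1]
    funext j
    fin_cases j <;> rfl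
  have key := exists_far_pair (t 2) (mem_latticeNeighbors.2 <| h1 ▸ P.step 1 (by omega))
    (t 3) (mem_latticeNeighbors.2 <| P.step 2 (by omega))
    (t 4) (mem_latticeNeighbors.2 <| P.step 3 (by omega))
  dsimp only at key
  rw [hpath, P.range_fin] at key
  have up_up_notMem : (0, 2) ∉ T := fun h => by
    have := P.outermost _ h
    have := P.corner_le P.zero_mem
    omega
  obtain hs | ⟨i, hi, d, hd, d', hd', hu, hw, far⟩ := key P.injective_fin P.up_mem.2 up_up_notMem
  · simp only [Prod.mk.injEq] at hs
    exact P.not_hook h1 hs.1 hs.2.1 hs.2.2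
  · have hd := P.mem_Ici_add (P.mem i hi.le) hd
    have hd' := P.mem_Ici_add (P.mem 4 le_rfl) hd'
    exact far.not_ge (P.near i hi _ ⟨hd.1, hu⟩ hd.2 _ ⟨hd'.1, hw⟩ hd'.2)

theorem chair (P : EscapePath c T n t) (h1 : t 1 = (-1, 0)) :
    n = 3 ∧ t 3 = (-2, 1) ∧ T = {(0, 0), (-1, 0), (-2, 0), (-2, 1), (-2, 2)} := by
  obtain rfl : n = 3 := by
    have := P.pos
    have := P.length_ne_one h1
    have := P.length_ne_two h1
    have := P.length_ne_four h1
    have := P.le_four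
    omega
  exact ⟨rfl, P.chair_of_length_three h1⟩

end EscapePath

/-! ### Holes near a corner -/

/-- A digraph with coordinates `e` in the quadrant `Set.Ici c`, arcs joining exactly the vertices at
distance one, and a hole `H` of at most five vertices outside the convex set `C`. The hole is walled
in by `C` (`closed`), every point of the quadrant next to it is the image of a vertex (`exists_eq`),
and no cell of it is farther from the corner `c` than the origin is (`outermost`). -/
structure CornerHole (A : V → V → Prop) (C H : Set V) (e : V → ℤ × ℤ) (c : ℤ × ℤ) : Prop where
  strong : StrongConnected A
  convex : DConvex A C
  asymm : ∀ u v, A u v → ¬A v u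
  injective : Function.Injective e
  adj_iff : ∀ u v, A u v ∨ A v u ↔ taxiDist (e u) (e v) = 1
  notMem : ∀ v ∈ H, v ∉ C
  closed : ∀ v ∈ H, ∀ w, taxiDist (e v) (e w) = 1 → w ∈ H ∨ w ∈ C
  corner_le : ∀ v, c ≤ e v
  exists_eq : ∀ v ∈ H, ∀ z, c ≤ z → taxiDist (e v) z = 1 → ∃ w, e w = z
  encard_le : H.encard ≤ 5
  outermost : ∀ v ∈ H, (e v).1 * ((e v).1 - 2 * c.1) + (e v).2 * ((e v).2 - 2 * c.2) ≤ 0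

namespace CornerHole

variable {A : V → V → Prop} {C H : Set V} {e : V → ℤ × ℤ} {c : ℤ × ℤ} {k l n : ℕ} {f : ℕ → V}
  {p u v w x y z : V}

theorem flip (h : CornerHole A C H e c) : CornerHole (flip A) C H e c where
  strong := h.strong.flip
  convex := h.convex.flip
  asymm u v huv := h.asymm v u huv
  injective := h.injective
  adj_iff u v := or_comm.trans (h.adj_iff u v)
  notMem := h.notMem
  closed := h.closed
  corner_le := h.corner_le
  exists_eq := h.exists_eq
  encard_le := h.encard_le
  outermost := h.outermost

theorem swap (h : CornerHole A C H e c) : CornerHole A C H (fun v => (e v).swap) c.swap where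
  strong := h.strong
  convex := h.convex
  asymm := h.asymm
  injective := Prod.swap_injective.comp h.injective
  adj_iff u v := (h.adj_iff u v).trans (by rw [taxiDist_swap])
  notMem := h.notMem
  closed v hv w hw := h.closed v hv w (by rwa [taxiDist_swap] at hw)
  corner_le v := Prod.swap_le_swap.2 (h.corner_le v)
  exists_eq v hv z hz hvz := by
    obtain ⟨w, hw⟩ := h.exists_eq v hv z.swap (Prod.swap_le_swap.1 (by simpa using hz)) (by
      rwa [← taxiDist_swap, Prod.swap_swap])
    exact ⟨w, by rw [hw, Prod.swap_swap]⟩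
  encard_le := h.encard_le
  outermost v hv := (add_comm _ _).trans_le (h.outermost v hv)

theorem taxiDist_le (h : CornerHole A C H e c) (hk : HasDirWalk A k u v) :
    taxiDist (e u) (e v) ≤ k ∧ taxiDist (e u) (e v) % 2 = k % 2 := by
  obtain ⟨f, rfl, rfl, hf⟩ := hk
  induction k with
  | zero => simp [taxiDist]
  | succ k ih =>
    have := ih fun i hi => hf i (hi.trans k.lt_succ_self)
    have := (h.adj_iff _ _).1 (.inl (hf k k.lt_succ_self))
    simp only [taxiDist] at *
    omega

theorem exists_geodesic_of_detour (h : CornerHole A C H e c) (hu : u ∈ C) (hv : v ∉ C)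
    (hw : w ∈ C) (huv : HasDirWalk A k u v) (hvw : HasDirWalk A l v w) :
    ∃ m, m + 2 ≤ k + l ∧ ∃ g, IsGeodesic A m g u w := by
  obtain ⟨m, hm, g, hg⟩ := h.convex.exists_shorter_geodesic hu hv hw huv hvw
  have := h.taxiDist_le ⟨g, hg.1⟩
  have := h.taxiDist_le (huv.trans hvw)
  exact ⟨m, by omega, g, hg⟩

theorem taxiDist_of_detour (h : CornerHole A C H e c) (hu : u ∈ C) (hv : v ∉ C) (hw : w ∈ C)
    (huv : HasDirWalk A k u v) (hvw : HasDirWalk A l v w) : taxiDist (e u) (e w) + 2 ≤ k + l := by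
  obtain ⟨m, hm, g, hg⟩ := h.exists_geodesic_of_detour hu hv hw huv hvw
  have := h.taxiDist_le ⟨g, hg.1⟩
  omega

theorem taxiDist_of_detour_of_blocked (h : CornerHole A C H e c) (hu : u ∈ C) (hv : v ∉ C)
    (hw : w ∈ C) (huv : HasDirWalk A k u v) (hvw : HasDirWalk A l v w)
    (straight : (e u).1 = (e w).1 ∨ (e u).2 = (e w).2) (hz : z ∉ C)
    (between : taxiDist (e u) (e z) + taxiDist (e z) (e w) = taxiDist (e u) (e w)) :
    taxiDist (e u) (e w) + 2 < k + l := by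
  obtain ⟨m, hm, g, hg⟩ := h.exists_geodesic_of_detour hu hv hw huv hvw
  have hle := h.taxiDist_le ⟨g, hg.1⟩
  refine lt_of_lt_of_le (Nat.add_lt_add_right (hle.1.lt_of_ne fun hlen => ?_) 2) hm
  have hzm : taxiDist (e u) (e z) ≤ m := by omega
  suffices g (taxiDist (e u) (e z)) = z from
    hz (this ▸ h.convex.2 u hu w hw m g hg _ hzm)
  have h1 := h.taxiDist_le (hg.1.segment (Nat.zero_le _) hzm)
  have h2 := h.taxiDist_le (hg.1.segment hzm le_rfl)
  rw [hg.1.1] at h1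
  rw [hg.1.2.1] at h2
  exact h.injective (eq_of_between straight between h1.1 (by omega))

theorem not_arc_of_arc (h : CornerHole A C H e c) (hv : v ∈ H) (hu : u ∈ C) (hw : w ∈ C)
    (huv : A u v) : ¬A v w := fun hvw => by
  have := h.taxiDist_of_detour hu (h.notMem v hv) hw (.of_arc huv) (.of_arc hvw)
  have huw : u = w := h.injective (by
    simp only [taxiDist, Prod.ext_iff] at this ⊢
    omega)
  exact h.asymm u v huv (huw ▸ hvw)

theorem exists_mem_eq (h : CornerHole A C H e c) (hv : v ∈ H) {z : ℤ × ℤ}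
    (hz : z ∈ Set.Ici c \ e '' H) (hvz : taxiDist (e v) z = 1) : ∃ w ∈ C, e w = z := by
  obtain ⟨w, rfl⟩ := h.exists_eq v hv z hz.1 hvz
  exact ⟨w, (h.closed v hv w hvz).resolve_left fun hw => hz.2 ⟨w, hw, rfl⟩, rfl⟩

theorem arc_of_exit (h : CornerHole A C H e c) (hv : v ∈ H) (hw : w ∈ C) (hx : x ∈ C)
    (hvw : A v w) (hvx : taxiDist (e v) (e x) = 1) : A v x :=
  ((h.adj_iff v x).2 hvx).resolve_right fun hxv => h.not_arc_of_arc hv hx hw hxv hvw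

theorem mem_of_isShortestWalkTo (h : CornerHole A C H e c) (hp : p ∈ H)
    (hf : IsShortestWalkTo A C k f p) {i : ℕ} (hi : i < k) : f i ∈ H := by
  induction i with
  | zero => exact hf.walk.1 ▸ hp
  | succ i ih =>
    exact (h.closed _ (ih (i.lt_succ_self.trans hi)) _
      ((h.adj_iff _ _).1 (.inl (hf.walk.2.2 i (i.lt_succ_self.trans hi))))).resolve_right
      (hf.notMem hi)

theorem detour (h : CornerHole A C H e c) (hp : p ∈ H)
    (hf : IsShortestWalkTo A C (n + 1) f p) {i : ℕ} (hi : i < n) (hu : u ∈ C) (hw : w ∈ C)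
    (hiu : taxiDist (e (f i)) (e u) = 1) (hnw : taxiDist (e (f n)) (e w) = 1) :
    HasDirWalk A 1 u (f i) ∧ HasDirWalk A (n - i + 1) (f i) w := by
  have enters : A u (f i) := ((h.adj_iff _ _).2 hiu).resolve_left fun hiu => by
    have := hf.le_of_arc (by omega) hu hiu
    omega
  have leaves : A (f n) w := h.arc_of_exit (h.mem_of_isShortestWalkTo hp hf n.lt_succ_self) hf.mem
    hw (hf.walk.2.2 n n.lt_succ_self) hnw
  exact ⟨.of_arc enters, (hf.walk.segment hi.le n.le_succ).trans (.of_arc leaves)⟩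

theorem escapePath (h : CornerHole A C H e c) (hp : p ∈ H) (hep : e p = (0, 0))
    (hu : u ∈ C) (hup : A u p) (hf : IsShortestWalkTo A C (n + 1) f p) :
    EscapePath c (e '' H) n (e ∘ f) where
  pos := Nat.pos_of_ne_zero fun hn => by
    subst hn
    exact h.not_arc_of_arc hp hu hf.mem hup (hf.walk.first_arc one_pos)
  start := (congrArg e hf.walk.1).trans hep
  mem i hi := ⟨f i, h.mem_of_isShortestWalkTo hp hf (Nat.lt_succ_iff.2 hi), rfl⟩
  injOn := h.injective.comp_injOn (hf.injOn.mono (Set.Iic_subset_Iic.2 n.le_succ))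
  step i hi := (h.adj_iff _ _).1 (.inl (hf.walk.2.2 i (hi.trans n.lt_succ_self)))
  exit := ⟨e (f (n + 1)),
    ⟨h.corner_le _, fun hmem => h.notMem _ (h.injective.mem_set_image.1 hmem) hf.mem⟩,
    (h.adj_iff _ _).1 (.inl (hf.walk.2.2 n n.lt_succ_self))⟩
  near i hi u hu hiu w hw hnw := by
    obtain ⟨u, huC, rfl⟩ := h.exists_mem_eq (h.mem_of_isShortestWalkTo hp hf (by omega)) hu hiu
    obtain ⟨w, hwC, rfl⟩ := h.exists_mem_eq (h.mem_of_isShortestWalkTo hp hf (by omega)) hw hnw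
    obtain ⟨h1, h2⟩ := h.detour hp hf hi huC hwC hiu hnw
    have := h.taxiDist_of_detour huC (hf.notMem (by omega)) hwC h1 h2
    omega
  near_of_blocked i hi u hu hiu w hw hnw := by
    obtain ⟨u, huC, rfl⟩ := h.exists_mem_eq (h.mem_of_isShortestWalkTo hp hf (by omega)) hu hiu
    obtain ⟨w, hwC, rfl⟩ := h.exists_mem_eq (h.mem_of_isShortestWalkTo hp hf (by omega)) hw hnw
    obtain ⟨h1, h2⟩ := h.detour hp hf hi huC hwC hiu hnw
    rintro straight _ ⟨z, hz, rfl⟩ between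
    have := h.taxiDist_of_detour_of_blocked huC (hf.notMem (by omega)) hwC h1 h2 straight
      (h.notMem z hz) between
    omega
  subset_Ici := by
    rintro _ ⟨v, -, rfl⟩
    exact h.corner_le v
  encard_le := (Set.encard_image_le e H).trans h.encard_le
  outermost := by
    rintro _ ⟨v, hv, rfl⟩
    exact h.outermost v hv

theorem exists_arc_from (h : CornerHole A C H e c) (hv : v ∈ H) : ∃ x, A v x := by
  obtain ⟨w, hw⟩ := h.convex.1
  exact h.strong.exists_arc_from fun hvw : v = w => h.notMem v hv (hvw ▸ hw)

theorem arc_from_dead_end (h : CornerHole A C H e c) (hv : v ∈ H)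
    (unique : ∀ x ∈ H, taxiDist (e v) (e x) = 1 → x = w) (hwv : A w v) (hy : y ∈ C)
    (hvy : taxiDist (e v) (e y) = 1) : A v y := by
  obtain ⟨x, hvx⟩ := h.exists_arc_from hv
  have adj := (h.adj_iff v x).1 (.inl hvx)
  have hx : x ∈ C := (h.closed v hv x adj).resolve_left fun hx =>
    h.asymm _ _ hwv (unique x hx adj ▸ hvx)
  exact h.arc_of_exit hv hx hy hvx hvy

theorem false_of_chair (h : CornerHole A C H e c) (hp : p ∈ H) (hf : IsShortestWalkTo A C 4 f p)
    (hep : e p = (0, 0)) (h3 : e (f 3) = (-2, 1))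
    (hT : e '' H = {(0, 0), (-1, 0), (-2, 0), (-2, 1), (-2, 2)}) : False := by
  obtain ⟨v, hv, hev⟩ : (-2, 2) ∈ e '' H := by simp [hT]
  have hcv : c.1 ≤ -2 ∧ c.2 ≤ 2 := (h.corner_le v).trans_eq hev
  have hcp : c.1 ≤ 0 ∧ c.2 ≤ 0 := (h.corner_le p).trans_eq hep
  have hf3 : f 3 ∈ H := h.mem_of_isShortestWalkTo hp hf (by omega)
  obtain ⟨r, hrC, hr⟩ := h.exists_mem_eq hp (z := (1, 0))
    ⟨Prod.le_def.2 ⟨by simp only; omega, hcp.2⟩, by simp [hT]⟩ (by rw [hep]; rfl)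
  obtain ⟨w, hwC, hw⟩ := h.exists_mem_eq hf3 (z := (-1, 1))
    ⟨Prod.le_def.2 ⟨by simp only; omega, by simp only; omega⟩, by simp [hT]⟩ (by rw [h3]; rfl)
  obtain ⟨y, hyC, hy⟩ := h.exists_mem_eq hv (z := (-2, 3))
    ⟨Prod.le_def.2 ⟨hcv.1, by simp only; omega⟩, by simp [hT]⟩ (by rw [hev]; rfl)
  have unique : ∀ x ∈ H, taxiDist (e v) (e x) = 1 → x = f 3 := fun x hx hvx => by
    have hex : e x ∈ e '' H := ⟨x, hx, rfl⟩
    simp only [hT, Set.mem_insert_iff, Set.mem_singleton_iff] at hex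
    apply h.injective
    rw [hev] at hvx
    rcases hex with hex | hex | hex | hex | hex <;> simp [hex, h3, taxiDist] at hvx ⊢
  have hvy : taxiDist (e v) (e y) = 1 := by rw [hev, hy]; rfl
  obtain ⟨hrp, -⟩ := h.detour hp hf (i := 0) (by omega) hrC hwC
    (by rw [hf.walk.1, hep, hr]; rfl) (by rw [h3, hw]; rfl)
  rcases (h.adj_iff v (f 3)).2 (by rw [hev, h3]; rfl) with hvf | hfv
  · have hyv := h.flip.arc_from_dead_end hv unique hvf hyC hvy
    have hfw := h.arc_of_exit hf3 hf.mem hwC (hf.walk.2.2 3 (by omega)) (by rw [h3, hw]; rfl)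
    have := h.taxiDist_of_detour hyC (h.notMem v hv) hwC (.of_arc hyv)
      ((HasDirWalk.of_arc hvf).trans (.of_arc hfw))
    rw [hy, hw] at this
    exact absurd this (by decide)
  · have hvy := h.arc_from_dead_end hv unique hfv hyC hvy
    have hpy := ((hf.walk.segment (Nat.zero_le 3) (by omega)).trans (.of_arc hfv)).trans
      (.of_arc hvy)
    have := h.taxiDist_of_detour hrC (hf.notMem (by omega)) hyC hrp hpy
    rw [hr, hy] at this
    exact absurd this (by decide)

theorem false_of_left (h : CornerHole A C H e c) (hp : p ∈ H) (hep : e p = (0, 0)) (hu : u ∈ C)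
    (hup : A u p) (hf : IsShortestWalkTo A C (n + 1) f p) (h1 : e (f 1) = (-1, 0)) : False := by
  obtain ⟨rfl, h3, hT⟩ := (h.escapePath hp hep hu hup hf).chair h1
  exact h.false_of_chair hp hf hep h3 hT

theorem not_arc_of_mem (h : CornerHole A C H e c) (hp : p ∈ H) (hep : e p = (0, 0))
    (hu : u ∈ C) : ¬A u p := fun hup => by
  obtain ⟨k, f, hf⟩ := h.strong.exists_isShortestWalkTo h.convex.1 p
  obtain ⟨n, rfl⟩ : ∃ n, k = n + 1 := Nat.exists_eq_add_one.2 <|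
    hf.walk.pos_of_ne fun hpk => h.notMem p hp (hpk ▸ hf.mem)
  have P := h.escapePath hp hep hu hup hf
  rcases P.next 1 rfl P.pos P.start with h1 | h1 | h1 | h1
  · exact P.right_mem.2 (h1 ▸ P.mem 1 P.pos)
  · exact h.false_of_left hp hep hu hup hf h1
  · exact P.up_mem.2 (h1 ▸ P.mem 1 P.pos)
  · have hf1 : e (f 1) = (0, -1) := h1
    exact h.swap.false_of_left hp (by rw [hep]; rfl) hu hup hf (by rw [hf1]; rfl)

theorem false_of_outermost (h : CornerHole A C H e c) (hp : p ∈ H) (hep : e p = (0, 0)) :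
    False := by
  have hcp : c.1 ≤ 0 ∧ c.2 ≤ 0 := (h.corner_le p).trans_eq hep
  have notMem : ((1 : ℤ), (0 : ℤ)) ∉ e '' H := by
    rintro ⟨v, hv, hev⟩
    have := h.outermost v hv
    rw [hev] at this
    omega
  obtain ⟨r, hrC, hr⟩ := h.exists_mem_eq hp (z := (1, 0))
    ⟨Prod.le_def.2 ⟨by simp only; omega, hcp.2⟩, notMem⟩ (by rw [hep]; rfl)
  rcases (h.adj_iff r p).2 (by rw [hr, hep]; rfl) with hrp | hpr
  · exact h.not_arc_of_mem hp hep hrC hrp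
  · exact h.flip.not_arc_of_mem hp hep hrC hpr

end CornerHole

/-! ### Large convex sets of the grid -/

section Grid

variable {n m : ℕ}

/-- A vertex of the grid as a point of the integer lattice. -/
def latticePoint (v : Fin n × Fin m) : ℤ × ℤ := (v.1, v.2)

theorem latticePoint_nonneg (v : Fin n × Fin m) : 0 ≤ latticePoint v :=
  ⟨Int.natCast_nonneg _, Int.natCast_nonneg _⟩

theorem latticePoint_injective : Function.Injective (latticePoint (n := n) (m := m)) := fun _ _ h =>
  Prod.ext (Fin.ext (Int.ofNat_inj.1 (congrArg Prod.fst h)))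
    (Fin.ext (Int.ofNat_inj.1 (congrArg Prod.snd h)))

theorem exists_latticePoint_eq {z : ℤ × ℤ} (hz : 0 ≤ z) (h1 : z.1 < n) (h2 : z.2 < m) :
    ∃ v : Fin n × Fin m, latticePoint v = z :=
  ⟨(⟨z.1.toNat, (Int.toNat_lt hz.1).2 h1⟩, ⟨z.2.toNat, (Int.toNat_lt hz.2).2 h2⟩),
    Prod.ext (Int.toNat_of_nonneg hz.1) (Int.toNat_of_nonneg hz.2)⟩

theorem gridGraph_adj {v w : Fin n × Fin m} :
    (gridGraph n m).Adj v w ↔ taxiDist (latticePoint v) (latticePoint w) = 1 := by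
  simp only [gridGraph, SimpleGraph.boxProd_adj, SimpleGraph.pathGraph_adj, taxiDist, latticePoint,
    Fin.ext_iff]
  omega

/-- The reflection of a path. -/
def pathGraphRev (n : ℕ) : SimpleGraph.pathGraph n ≃g SimpleGraph.pathGraph n where
  toEquiv := Fin.revPerm
  map_rel_iff' := by
    simp only [SimpleGraph.pathGraph_adj, Fin.revPerm_apply, Fin.val_rev]
    omega

theorem exists_pathGraph_iso_lt {a b : Fin n} (h : a ≠ b) :
    ∃ φ : SimpleGraph.pathGraph n ≃g SimpleGraph.pathGraph n, φ a < φ b :=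
  h.lt_or_gt.elim (fun h => ⟨.refl, h⟩) fun h => ⟨pathGraphRev n, Fin.rev_lt_rev.2 h⟩

theorem exists_fiber_subset {α β : Type*} [Finite α] {C : Set α} {f : α → β}
    (h : Cᶜ.ncard < Nat.card β) : ∃ b, ∀ a, f a = b → a ∈ C := by
  by_contra! hC
  have image_eq : f '' Cᶜ = Set.univ := Set.eq_univ_of_forall fun b =>
    let ⟨a, ha, haC⟩ := hC b
    ⟨a, haC, ha⟩
  have := Set.ncard_image_le (f := f) (Set.toFinite Cᶜ)
  rw [image_eq, Set.ncard_univ] at this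
  omega

theorem gridGraph_adj_iso {v w : Fin n × Fin m}
    (φ : SimpleGraph.pathGraph n ≃g SimpleGraph.pathGraph n)
    (ψ : SimpleGraph.pathGraph m ≃g SimpleGraph.pathGraph m) :
    (gridGraph n m).Adj (φ v.1, ψ v.2) (φ w.1, ψ w.2) ↔ (gridGraph n m).Adj v w := by
  simp only [gridGraph, SimpleGraph.boxProd_adj, φ.map_adj_iff, ψ.map_adj_iff,
    φ.injective.eq_iff, ψ.injective.eq_iff]

theorem encard_commonNeighbors_gridGraph_le {u v : Fin n × Fin m} (huv : u ≠ v) :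
    ((gridGraph n m).commonNeighbors u v).encard ≤ 2 := by
  obtain ⟨a, b, h⟩ := exists_pair_of_taxiDist_eq_one (latticePoint_injective.ne huv)
  rw [← latticePoint_injective.encard_image]
  refine (Set.encard_le_encard (t := {a, b}) ?_).trans
    ((Set.encard_insert_le _ _).trans (by simp [one_add_one_eq_two]))
  rintro _ ⟨w, hw, rfl⟩
  exact h _ (gridGraph_adj.1 hw.1) (gridGraph_adj.1 hw.2)

/-- The chessboard colouring of the grid. -/
def gridGraphBicoloring (n m : ℕ) : (gridGraph n m).Coloring Bool :=
  .mk (fun v => decide (Even (v.1.val + v.2.val))) fun {v w} h => by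
    have := gridGraph_adj.1 h
    simp only [taxiDist, latticePoint, ne_eq, decide_eq_decide, Nat.even_iff] at *
    omega

variable {A : Fin n × Fin m → Fin n × Fin m → Prop} {C : Set (Fin n × Fin m)}

theorem cornerHole_of_outermost (hA : IsOrientation (gridGraph n m) A) (strong : StrongConnected A)
    (convex : DConvex A C) (h5 : Cᶜ.ncard ≤ 5) {a : Fin n} {b : Fin m}
    (row : ∀ v : Fin n × Fin m, v.1 = a → v ∈ C) (column : ∀ v : Fin n × Fin m, v.2 = b → v ∈ C)
    {φ : SimpleGraph.pathGraph n ≃g SimpleGraph.pathGraph n}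
    {ψ : SimpleGraph.pathGraph m ≃g SimpleGraph.pathGraph m} {p : Fin n × Fin m}
    (outermost : ∀ v ∈ {v | v ∉ C ∧ φ v.1 < φ a ∧ ψ v.2 < ψ b},
      (φ v.1 : ℤ) ^ 2 + (ψ v.2 : ℤ) ^ 2 ≤ (φ p.1 : ℤ) ^ 2 + (ψ p.2 : ℤ) ^ 2) :
    CornerHole A C {v | v ∉ C ∧ φ v.1 < φ a ∧ ψ v.2 < ψ b}
      (fun v => latticePoint (φ v.1, ψ v.2) - latticePoint (φ p.1, ψ p.2))
      (-latticePoint (φ p.1, ψ p.2)) where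
  strong := strong
  convex := convex
  asymm := hA.2.2
  injective := sub_left_injective.comp
    (latticePoint_injective.comp (φ.injective.prodMap ψ.injective))
  adj_iff u v := by
    rw [hA.adj_iff, taxiDist_sub_right, ← gridGraph_adj, gridGraph_adj_iso]
  notMem v hv := hv.1
  closed v hv w hvw := by
    rw [taxiDist_sub_right] at hvw
    refine or_iff_not_imp_right.2 fun hw => ⟨hw, ?_, ?_⟩
    · have : φ w.1 ≠ φ a := φ.injective.ne fun h => hw (row w h)
      have := hv.2.1
      simp only [taxiDist, latticePoint] at hvw
      omega
    · have : ψ w.2 ≠ ψ b := ψ.injective.ne fun h => hw (column w h)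
      have := hv.2.2
      simp only [taxiDist, latticePoint] at hvw
      omega
  corner_le v := by simpa using latticePoint_nonneg (φ v.1, ψ v.2)
  exists_eq v hv z hz hvz := by
    have := hv.2
    simp only [taxiDist, latticePoint, Prod.fst_sub, Prod.snd_sub] at hvz
    obtain ⟨w, hw⟩ := exists_latticePoint_eq (n := n) (m := m)
      (z := z + latticePoint (φ p.1, ψ p.2)) (neg_le_iff_add_nonneg.1 hz)
      (by simp only [latticePoint, Prod.fst_add]; omega)
      (by simp only [latticePoint, Prod.snd_add]; omega)
    exact ⟨(φ.symm w.1, ψ.symm w.2), by simp [hw]⟩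
  encard_le := by
    rw [← (Set.toFinite _).cast_ncard_eq]
    exact_mod_cast (Set.ncard_le_ncard fun v (hv : _ ∧ _) => hv.1).trans h5
  outermost v hv := by
    simp only [latticePoint, Prod.fst_sub, Prod.snd_sub, Prod.fst_neg, Prod.snd_neg]
    linarith [outermost v hv]

theorem DConvex.eq_univ_of_ncard_compl_lt (convex : DConvex A C)
    (hA : IsOrientation (gridGraph n m) A) (strong : StrongConnected A)
    (h5 : Cᶜ.ncard ≤ 5) (hn : Cᶜ.ncard < n) (hm : Cᶜ.ncard < m) : C = Set.univ := by
  by_contra hC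
  obtain ⟨t, ht⟩ := (Set.ne_univ_iff_exists_notMem C).1 hC
  obtain ⟨a, row⟩ :=
    exists_fiber_subset (f := Prod.fst) (by simpa using hn : _ < Nat.card (Fin n))
  obtain ⟨b, column⟩ :=
    exists_fiber_subset (f := Prod.snd) (by simpa using hm : _ < Nat.card (Fin m))
  obtain ⟨φ, hφ⟩ := exists_pathGraph_iso_lt fun h : t.1 = a => ht (row t h)
  obtain ⟨ψ, hψ⟩ := exists_pathGraph_iso_lt fun h : t.2 = b => ht (column t h)
  obtain ⟨p, hp, outermost⟩ := Set.exists_max_image {v | v ∉ C ∧ φ v.1 < φ a ∧ ψ v.2 < ψ b}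
    (fun v => (φ v.1 : ℤ) ^ 2 + (ψ v.2 : ℤ) ^ 2) (Set.toFinite _) ⟨t, ht, hφ, hψ⟩
  exact (cornerHole_of_outermost hA strong convex h5 row column outermost).false_of_outermost hp
    (sub_self _)

end Grid

/-! ### Small convex sets -/

section SmallConvexSets

variable {A : V → V → Prop} {C : Set V} {u : V}

theorem DConvex.exists_arc_mem (hC : DConvex A C) (hA : StrongConnected A) (hne : C.Nontrivial)
    (hu : u ∈ C) : ∃ x ∈ C, A u x := by
  obtain ⟨v, hv, hvu⟩ := hne.exists_ne u
  obtain ⟨k, hk⟩ := hA u v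
  obtain ⟨l, -, g, hg⟩ := HasDirWalk.exists_geodesic_le hk
  have hl := hg.1.pos_of_ne hvu.symm
  exact ⟨g 1, hC.2 u hu v hv l g hg 1 hl, hg.1.first_arc hl⟩

theorem DConvex.nontrivial_neighborSet_inter {G : SimpleGraph V} (hC : DConvex A C)
    (hA : IsOrientation G A) (strong : StrongConnected A) (hne : C.Nontrivial) (hu : u ∈ C) :
    (G.neighborSet u ∩ C).Nontrivial := by
  obtain ⟨x, hx, hux⟩ := hC.exists_arc_mem strong hne hu
  obtain ⟨y, hy, hyu⟩ := hC.flip.exists_arc_mem strong.flip hne hu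
  exact ⟨x, ⟨hA.1 u x hux, hx⟩, y, ⟨(hA.1 y u hyu).symm, hy⟩,
    fun hxy => hA.2.2 u x hux (hxy ▸ hyu)⟩

variable {G : SimpleGraph V} {b : Bool}

theorem neighborSet_inter_subset_color (col : G.Coloring Bool) (h : col u = b) :
    G.neighborSet u ∩ C ⊆ C ∩ col ⁻¹' {!b} := fun _ hv =>
  ⟨hv.2, Bool.eq_not.2 (h ▸ (col.valid hv.1).symm)⟩

theorem exists_mem_color_eq (col : G.Coloring Bool) (hC : C.Nonempty)
    (degree : ∀ u ∈ C, (G.neighborSet u ∩ C).Nontrivial) (b : Bool) : ∃ u ∈ C, col u = b := by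
  obtain ⟨u, hu⟩ := hC
  by_cases hub : col u = b
  · exact ⟨u, hu, hub⟩
  · obtain ⟨v, hv⟩ := (degree u hu).nonempty
    have := neighborSet_inter_subset_color col (Bool.eq_not.2 hub) hv
    exact ⟨v, hv.2, by simpa using this.2⟩

theorem nontrivial_color (col : G.Coloring Bool) (hC : C.Nonempty)
    (degree : ∀ u ∈ C, (G.neighborSet u ∩ C).Nontrivial) (b : Bool) :
    (C ∩ col ⁻¹' {b}).Nontrivial := by
  obtain ⟨u, hu, hub⟩ := exists_mem_color_eq col hC degree !b
  simpa using (degree u hu).mono (neighborSet_inter_subset_color col hub)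

theorem color_subset_commonNeighbors (col : G.Coloring Bool)
    (degree : ∀ u ∈ C, (G.neighborSet u ∩ C).Nontrivial) {x y : V}
    (hxy : C ∩ col ⁻¹' {b} = {x, y}) : C ∩ col ⁻¹' {!b} ⊆ G.commonNeighbors x y := by
  rintro u ⟨hu, hub⟩
  have subset : G.neighborSet u ∩ C ⊆ {x, y} := by
    simpa only [Bool.not_not, hxy] using neighborSet_inter_subset_color (C := C) col hub
  obtain ⟨v, hv, w, hw, hvw⟩ := degree u hu
  rcases subset hv with rfl | rfl <;> rcases subset hw with rfl | rfl
  · exact absurd rfl hvw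
  · exact ⟨hv.1.symm, hw.1.symm⟩
  · exact ⟨hw.1.symm, hv.1.symm⟩
  · exact absurd rfl hvw

theorem four_le_ncard_and_ncard_ne_five (col : G.Coloring Bool)
    (common : ∀ u v, u ≠ v → (G.commonNeighbors u v).encard ≤ 2) (hfin : C.Finite)
    (hC : C.Nonempty) (degree : ∀ u ∈ C, (G.neighborSet u ∩ C).Nontrivial) :
    4 ≤ C.ncard ∧ C.ncard ≠ 5 := by
  have two_le (b : Bool) : 2 ≤ (C ∩ col ⁻¹' {b}).ncard :=
    Set.one_lt_ncard_iff_nontrivial_and_finite.2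
      ⟨nontrivial_color col hC degree b, hfin.inter_of_left _⟩
  have le_two (b : Bool) (hb : (C ∩ col ⁻¹' {b}).ncard = 2) :
      (C ∩ col ⁻¹' {!b}).ncard ≤ 2 := by
    obtain ⟨x, y, hxy, hb⟩ := Set.ncard_eq_two.1 hb
    rw [← Nat.cast_le (α := ℕ∞), (hfin.inter_of_left _).cast_ncard_eq]
    exact (Set.encard_le_encard (color_subset_commonNeighbors col degree hb)).trans
      (common x y hxy)
  have add : (C ∩ col ⁻¹' {true}).ncard + (C ∩ col ⁻¹' {false}).ncard = C.ncard := by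
    rw [← Set.ncard_inter_add_ncard_sdiff_eq_ncard C (col ⁻¹' {true}) hfin]
    congr 2
    ext v
    simp
  have := two_le true
  have := two_le false
  have := le_two true
  have := le_two false
  simp only [Bool.not_true, Bool.not_false] at *
  omega

theorem DConvex.four_le_ncard_and_ncard_ne_five_of_gridGraph {n m : ℕ}
    {A : Fin n × Fin m → Fin n × Fin m → Prop} {C : Set (Fin n × Fin m)} (hC : DConvex A C)
    (hA : IsOrientation (gridGraph n m) A) (strong : StrongConnected A) (hne : C.Nontrivial) :
    4 ≤ C.ncard ∧ C.ncard ≠ 5 :=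
  four_le_ncard_and_ncard_ne_five (gridGraphBicoloring n m)
    (fun _ _ => encard_commonNeighbors_gridGraph_le) C.toFinite hC.1
    fun _ => hC.nontrivial_neighborSet_inter hA strong hne

end SmallConvexSets

section Spectrum

theorem dConvex_singleton (A : V → V → Prop) (v : V) : DConvex A {v} := by
  refine ⟨Set.singleton_nonempty v, ?_⟩
  rintro _ rfl _ rfl k f ⟨hf, hmin⟩ i hi
  obtain rfl : k = 0 := Nat.le_zero.1 (hmin 0 f ⟨hf.1, hf.1, by simp⟩)
  obtain rfl : i = 0 := Nat.le_zero.1 hi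
  exact hf.1

theorem exists_dConvex_ncard_eq_convexityNumber [Fintype V] [Nontrivial V] (A : V → V → Prop) :
    ∃ C, DConvex A C ∧ C ≠ Set.univ ∧ C.ncard = convexityNumber A := by
  obtain ⟨v⟩ := Nontrivial.to_nonempty (α := V)
  refine Nat.sSup_mem
    (s := {k | ∃ C : Set V, DConvex A C ∧ C ≠ Set.univ ∧ C.ncard = k})
    ⟨_, {v}, dConvex_singleton A v, Set.singleton_ne_univ v, rfl⟩ ⟨Nat.card V, ?_⟩
  rintro _ ⟨C, -, -, rfl⟩
  exact Set.ncard_le_card C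

variable {k : ℕ}

theorem exists_dConvex_of_mem_spectrum [Fintype V] [Nontrivial V] {G : SimpleGraph V}
    (h : k ∈ strongConvexitySpectrum G) : ∃ A C, IsOrientation G A ∧ StrongConnected A ∧
      DConvex A C ∧ C ≠ Set.univ ∧ C.ncard = k := by
  obtain ⟨A, hA, strong, rfl⟩ := h
  obtain ⟨C, hC⟩ := exists_dConvex_ncard_eq_convexityNumber A
  exact ⟨A, C, hA, strong, hC⟩

variable {n m : ℕ}

theorem sub_notMem_strongConvexitySpectrum_gridGraph [Nontrivial (Fin n × Fin m)]
    (h5 : k ≤ 5) (hn : k < n) (hm : k < m) :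
    n * m - k ∉ strongConvexitySpectrum (gridGraph n m) := fun h => by
  obtain ⟨A, C, hA, strong, hC, hne, hcard⟩ := exists_dConvex_of_mem_spectrum h
  have compl : Cᶜ.ncard = k := by
    have := Set.ncard_add_ncard_compl C
    have : k < n * m := hn.trans_le (Nat.le_mul_of_pos_right n (by omega))
    simp only [Nat.card_prod, Nat.card_fin] at *
    omega
  subst compl
  exact hne (hC.eq_univ_of_ncard_compl_lt hA strong h5 hn hm)

theorem notMem_strongConvexitySpectrum_gridGraph [Nontrivial (Fin n × Fin m)]
    (h : k = 2 ∨ k = 3 ∨ k = 5) : k ∉ strongConvexitySpectrum (gridGraph n m) := fun hk => by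
  obtain ⟨A, C, hA, strong, hC, -, rfl⟩ := exists_dConvex_of_mem_spectrum hk
  have := hC.four_le_ncard_and_ncard_ne_five_of_gridGraph hA strong
    (Set.one_lt_ncard_iff_nontrivial.1 (by omega))
  omega

end Spectrum

/-- Forbidden values of the strong convexity spectrum of a grid. -/
theorem forbidden_values_strongConvexitySpectrum_grid (n m : ℕ) (hn : 2 ≤ n) (hm : 2 ≤ m) :
    (2 ∉ strongConvexitySpectrum (gridGraph n m) ∧
     3 ∉ strongConvexitySpectrum (gridGraph n m) ∧
     5 ∉ strongConvexitySpectrum (gridGraph n m) ∧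
     n * m - 1 ∉ strongConvexitySpectrum (gridGraph n m)) ∧
    (∀ i ∈ ({3, 4, 5, 6} : Set ℕ), i ≤ n → i ≤ m →
      n * m - (i - 1) ∉ strongConvexitySpectrum (gridGraph n m)) := by
  have := Fin.nontrivial_iff_two_le.2 hn
  have := Fin.pos_iff_nonempty.1 (zero_lt_two.trans_le hm)
  refine ⟨⟨?_, ?_, ?_, ?_⟩, fun i hi hin him => ?_⟩
  · exact notMem_strongConvexitySpectrum_gridGraph (by simp)
  · exact notMem_strongConvexitySpectrum_gridGraph (by simp)
  · exact notMem_strongConvexitySpectrum_gridGraph (by simp)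
  · exact sub_notMem_strongConvexitySpectrum_gridGraph (by omega) hn hm
  · have : 3 ≤ i ∧ i ≤ 6 := by rcases hi with rfl | rfl | rfl | rfl <;> omega
    exact sub_notMem_strongConvexitySpectrum_gridGraph (by omega) (by omega) (by omega)
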